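/- Let v ∈ ℂ^m ⊗ ℂ^n be a unit vector with Schmidt coefficients α₁ ≥ α₂ ≥ … ≥ α_{min(m,n)} ≥ 0 and fix 1 ≤ k ≤ min(m,n). Then r_k^⊗(|v⟩⟨v|) = ‖|v⟩⟨v|‖_{S(k)} = Σ_{i=1}^k α_i². -/

import Mathlib

open scoped Kronecker ComplexOrder
open Matrix

namespace Ent

variable {ι κ : Type*} [Fintype ι] [Fintype κ]

/-- Inner product ⟨v,w⟩ = Σᵢ conj(v i) * (w i) (conjugate-linear in the first argument). -/
noncomputable def vinner (v w : ι → ℂ) : ℂ := dotProduct (star v) w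

/-- An elementary (product) tensor a ⊗ b in ℂ^ι ⊗ ℂ^κ. -/
def prodVec (a : ι → ℂ) (b : κ → ℂ) : ι × κ → ℂ := fun p => a p.1 * b p.2

/-- `v` has Schmidt rank at most `k`. -/
def SchmidtRankLE (k : ℕ) (v : ι × κ → ℂ) : Prop :=
  ∃ (a : Fin k → ι → ℂ) (b : Fin k → κ → ℂ), v = ∑ i, prodVec (a i) (b i)

/-- The rank-one operator |v⟩⟨w|. -/
noncomputable def ketBra (v : ι → ℂ) (w : κ → ℂ) : Matrix ι κ ℂ :=
  Matrix.vecMulVec v (star w)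

/-- A finite family of vectors is orthonormal. -/
def Orthonormal' {N : Type*} [DecidableEq N] (v : N → ι → ℂ) : Prop :=
  ∀ i j, vinner (v i) (v j) = if i = j then 1 else 0

/-- The S(k)-norm of `X ∈ M_ι ⊗ M_κ`. -/
noncomputable def SkNorm (k : ℕ) (X : Matrix (ι × κ) (ι × κ) ℂ) : ℝ :=
  sSup { r | ∃ v w : ι × κ → ℂ, vinner v v = 1 ∧ vinner w w = 1 ∧
    SchmidtRankLE k v ∧ SchmidtRankLE k w ∧
    r = ‖vinner v (X.mulVec w)‖ }

/-- The product numerical radius r_k^⊗. -/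
noncomputable def prodRad (k : ℕ) (Y : Matrix (ι × κ) (ι × κ) ℂ) : ℝ :=
  sSup { r | ∃ v : ι × κ → ℂ, vinner v v = 1 ∧ SchmidtRankLE k v ∧
    r = ‖vinner v (Y.mulVec v)‖ }

/-- The norm ‖·‖_{γ,k}. -/
noncomputable def gammaNorm (k : ℕ) (X : Matrix (ι × κ) (ι × κ) ℂ) : ℝ :=
  sInf { r | ∃ (N : ℕ) (c : Fin N → ℂ) (v w : Fin N → (ι × κ → ℂ)),
    (∀ i, vinner (v i) (v i) = 1 ∧ vinner (w i) (w i) = 1 ∧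
      SchmidtRankLE k (v i) ∧ SchmidtRankLE k (w i)) ∧
    X = ∑ i, c i • ketBra (v i) (w i) ∧
    r = ∑ i, ‖c i‖ }

/-- `ρ` is a density matrix. -/
def IsDensity (ρ : Matrix ι ι ℂ) : Prop := ρ.PosSemidef ∧ ρ.trace = 1

/-- `ρ` has Schmidt number at most `k`: it is a convex combination of projections onto
unit vectors of Schmidt rank at most `k`. -/
def SchmidtNumLE (k : ℕ) (ρ : Matrix (ι × κ) (ι × κ) ℂ) : Prop :=
  ∃ (N : ℕ) (p : Fin N → ℝ) (v : Fin N → (ι × κ → ℂ)),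
    (∀ i, 0 ≤ p i ∧ vinner (v i) (v i) = 1 ∧ SchmidtRankLE k (v i)) ∧
    (∑ i, p i) = 1 ∧ ρ = ∑ i, p i • ketBra (v i) (v i)

/-- The robustness norm R_k on Hermitian operators. -/
noncomputable def Rk (k : ℕ) (Y : Matrix (ι × κ) (ι × κ) ℂ) : ℝ :=
  sInf { r | ∃ (c₁ c₂ : ℝ) (ρ₁ ρ₂ : Matrix (ι × κ) (ι × κ) ℂ),
    0 ≤ c₁ ∧ 0 ≤ c₂ ∧ IsDensity ρ₁ ∧ IsDensity ρ₂ ∧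
    SchmidtNumLE k ρ₁ ∧ SchmidtNumLE k ρ₂ ∧
    Y = c₁ • ρ₁ - c₂ • ρ₂ ∧ r = c₁ + c₂ }

/-- `Y` is k-block positive: ⟨v|Y|v⟩ ≥ 0 for every unit vector of Schmidt rank at most `k`. -/
def KBlockPos (k : ℕ) (Y : Matrix (ι × κ) (ι × κ) ℂ) : Prop :=
  ∀ v : ι × κ → ℂ, vinner v v = 1 → SchmidtRankLE k v →
    0 ≤ (vinner v (Y.mulVec v)).re

/-- Dual of a norm on matrices, w.r.t. the Hilbert–Schmidt inner product ⟨W,X⟩ = Tr(Wᴴ X). -/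
noncomputable def dualNormM (f : Matrix ι κ ℂ → ℝ) (X : Matrix ι κ ℂ) : ℝ :=
  sSup { r | ∃ W : Matrix ι κ ℂ, f W ≤ 1 ∧ r = ‖(Wᴴ * X).trace‖ }

/-- Dual of a norm, computed in the real Hilbert space of Hermitian matrices with the
Hilbert–Schmidt inner product ⟨W,Y⟩ = Tr(WY). -/
noncomputable def dualNormHerm (f : Matrix ι ι ℂ → ℝ) (Y : Matrix ι ι ℂ) : ℝ :=
  sSup { r | ∃ W : Matrix ι ι ℂ, W.IsHermitian ∧ f W ≤ 1 ∧ r = |((W * Y).trace).re| }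

/-- The Frobenius norm of a matrix. -/
noncomputable def frobNorm (X : Matrix ι κ ℂ) : ℝ :=
  Real.sqrt (∑ i, ∑ j, Complex.normSq (X i j))

/-- The (k,2)-norm: ‖X‖_{(k,2)} = sup { |Tr(XY)| : rank Y ≤ k, ‖Y‖_F ≤ 1 }. -/
noncomputable def kNorm (k : ℕ) (X : Matrix ι κ ℂ) : ℝ :=
  sSup { r | ∃ Y : Matrix κ ι ℂ, Y.rank ≤ k ∧ frobNorm Y ≤ 1 ∧
    r = ‖(X * Y).trace‖ }

/-- The trace norm: the sum of the singular values, i.e. of the square roots of the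
eigenvalues of Xᴴ X. -/
noncomputable def traceNorm [DecidableEq κ] (X : Matrix ι κ ℂ) : ℝ :=
  ∑ i, Real.sqrt ((Matrix.isHermitian_conjTranspose_mul_self X).eigenvalues i)

/-- The s(k) vector norm: sup of |⟨u,w⟩| over unit vectors u of Schmidt rank at most k. -/
noncomputable def skVecNorm (k : ℕ) (w : ι × κ → ℂ) : ℝ :=
  sSup { r | ∃ u : ι × κ → ℂ, vinner u u = 1 ∧ SchmidtRankLE k u ∧
    r = ‖vinner u w‖ }

/-- Dual of a norm on vectors. -/
noncomputable def dualNormV (f : (ι × κ → ℂ) → ℝ) (v : ι × κ → ℂ) : ℝ :=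
  sSup { r | ∃ w : ι × κ → ℂ, f w ≤ 1 ∧ r = ‖vinner w v‖ }

/-- The realignment map, L(X)_{(i,k),(j,l)} = X_{(i,j),(k,l)}. -/
def realign {m n : ℕ} (X : Matrix (Fin m × Fin n) (Fin m × Fin n) ℂ) :
    Matrix (Fin m × Fin m) (Fin n × Fin n) ℂ :=
  fun p q => X (p.1, q.1) (p.2, q.2)

/-- The projective tensor norm on M_{m,n} ⊗ M_{m,n}. -/
noncomputable def projNorm {m n : ℕ} (Z : Matrix (Fin m × Fin m) (Fin n × Fin n) ℂ) : ℝ :=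
  sInf { r | ∃ (N : ℕ) (A B : Fin N → Matrix (Fin m) (Fin n) ℂ),
    Z = ∑ i, A i ⊗ₖ B i ∧ r = ∑ i, traceNorm (A i) * traceNorm (B i) }


lemma vinner_eq_inner {ι : Type*} [Fintype ι] (x y : ι → ℂ) :
    vinner x y = inner ℂ (WithLp.toLp 2 x : EuclideanSpace ℂ ι) (WithLp.toLp 2 y) := by
  rw [EuclideanSpace.inner_eq_star_dotProduct, dotProduct_comm]; rfl

lemma vinner_sum_left {ι N : Type*} [Fintype ι] (s : Finset N) (f : N → ι → ℂ) (w : ι → ℂ) :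
    vinner (∑ i ∈ s, f i) w = ∑ i ∈ s, vinner (f i) w := by
  simp only [vinner, star_sum, sum_dotProduct]

lemma vinner_sum_right {ι N : Type*} [Fintype ι] (s : Finset N) (f : N → ι → ℂ) (w : ι → ℂ) :
    vinner w (∑ i ∈ s, f i) = ∑ i ∈ s, vinner w (f i) := by
  simp only [vinner, dotProduct_sum]

lemma vinner_rsmul_left {ι : Type*} [Fintype ι] (c : ℝ) (x y : ι → ℂ) :
    vinner (c • x) y = (c : ℂ) * vinner x y := by
  simp [vinner, star_smul, smul_dotProduct]

lemma vinner_rsmul_right {ι : Type*} [Fintype ι] (c : ℝ) (x y : ι → ℂ) :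
    vinner x (c • y) = (c : ℂ) * vinner x y := by
  simp [vinner, dotProduct_smul]

lemma vinner_prodVec {ι κ : Type*} [Fintype ι] [Fintype κ] (a c : ι → ℂ) (b d : κ → ℂ) :
    vinner (prodVec a b) (prodVec c d) = vinner a c * vinner b d := by
  simp only [vinner, dotProduct, prodVec, Fintype.sum_prod_type, Finset.sum_mul_sum, Pi.star_apply,
    star_mul']
  refine Finset.sum_congr rfl fun i _ => Finset.sum_congr rfl fun j _ => by ring

lemma vinner_ketBra {ι : Type*} [Fintype ι] (u v w : ι → ℂ) :
    vinner u ((ketBra v v).mulVec w) = vinner u v * vinner v w := by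
  simp [vinner, ketBra, vecMulVec_mulVec, dotProduct_smul, mul_comm]

lemma norm_vinner_comm {ι : Type*} [Fintype ι] (u v : ι → ℂ) :
    ‖vinner u v‖ = ‖vinner v u‖ := by
  rw [vinner_eq_inner, vinner_eq_inner, norm_inner_symm]

lemma vinner_conj {ι : Type*} [Fintype ι] (u v : ι → ℂ) :
    star (vinner u v) = vinner v u := by
  rw [vinner_eq_inner, vinner_eq_inner]; exact inner_conj_symm _ _

lemma vinner_self {ι : Type*} [Fintype ι] (u : ι → ℂ) :
    vinner u u = ((‖(WithLp.toLp 2 u : EuclideanSpace ℂ ι)‖ ^ 2 : ℝ) : ℂ) := by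
  rw [vinner_eq_inner, inner_self_eq_norm_sq_to_K]; simp

lemma vinner_cs {ι : Type*} [Fintype ι] (u v : ι → ℂ) (A B : ℝ) (hu : vinner u u = A)
    (hv : vinner v v = B) : ‖vinner u v‖ ^ 2 ≤ A * B := by
  rw [vinner_self] at hu hv
  have hu := Complex.ofReal_injective hu
  have hv := Complex.ofReal_injective hv
  rw [← hu, ← hv, vinner_eq_inner, ← mul_pow]
  gcongr
  exact norm_inner_le_norm _ _

lemma vinner_bessel {ι N : Type*} [Fintype ι] [DecidableEq N] (s : Finset N) (f : N → ι → ℂ)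
    (hf : ∀ i ∈ s, ∀ j ∈ s, vinner (f i) (f j) = if i = j then 1 else 0) (x : ι → ℂ)
    (hx : vinner x x = 1) : ∑ i ∈ s, ‖vinner (f i) x‖ ^ 2 ≤ 1 := by
  have ho : Orthonormal ℂ (fun i : s => (WithLp.toLp 2 (f i) : EuclideanSpace ℂ ι)) := by
    rw [orthonormal_iff_ite]
    rintro ⟨i, hi⟩ ⟨j, hj⟩
    rw [← vinner_eq_inner, hf i hi j hj]
    simp
  have h := ho.sum_inner_products_le (WithLp.toLp 2 x) (s := Finset.univ)
  rw [vinner_self] at hx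
  have hx : ‖(WithLp.toLp 2 x : EuclideanSpace ℂ ι)‖ ^ 2 = 1 := by exact_mod_cast hx
  rw [hx] at h
  rw [← Finset.sum_coe_sort]
  simpa only [vinner_eq_inner] using h

lemma exists_on {ι : Type*} [Fintype ι] {k : ℕ} (c : Fin k → ι → ℂ) :
    ∃ r ≤ k, ∃ f : Fin r → ι → ℂ, (∀ i j, vinner (f i) (f j) = if i = j then 1 else 0) ∧
      ∃ t : Fin k → Fin r → ℂ, ∀ l, c l = ∑ j, t l j • f j := by
  let C : Fin k → EuclideanSpace ℂ ι := fun l => WithLp.toLp 2 (c l)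
  let W := Submodule.span ℂ (Set.range C)
  let B := stdOrthonormalBasis ℂ W
  refine ⟨Module.finrank ℂ W, ?_, fun j => WithLp.ofLp (B j : EuclideanSpace ℂ ι), ?_, ?_⟩
  · have h := finrank_range_le_card (R := ℂ) C
    rw [Fintype.card_fin] at h
    exact h
  · intro i j
    rw [vinner_eq_inner]
    exact (orthonormal_iff_ite.mp B.orthonormal) i j
  · refine ⟨fun l j => B.repr ⟨C l, Submodule.subset_span ⟨l, rfl⟩⟩ j, fun l => ?_⟩
    have h := B.sum_repr ⟨C l, Submodule.subset_span ⟨l, rfl⟩⟩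
    have h2 := congrArg (fun x : W => WithLp.ofLp (x : EuclideanSpace ℂ ι)) h
    simp only [Submodule.coe_sum, Submodule.coe_smul, WithLp.ofLp_sum, WithLp.ofLp_smul] at h2
    exact h2.symm

lemma rank_form {ι κ : Type*} [Fintype ι] [Fintype κ] {k : ℕ} (u : ι × κ → ℂ)
    (h : SchmidtRankLE k u) :
    ∃ r ≤ k, ∃ f : Fin r → ι → ℂ, (∀ i j, vinner (f i) (f j) = if i = j then 1 else 0) ∧
      ∃ g : Fin r → κ → ℂ, u = ∑ j, prodVec (f j) (g j) := by
  obtain ⟨c, d, rfl⟩ := h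
  obtain ⟨r, hr, f, hf, t, ht⟩ := exists_on c
  refine ⟨r, hr, f, hf, fun j => ∑ l, t l j • d l, ?_⟩
  ext ⟨x, y⟩
  simp only [Finset.sum_apply, prodVec, ht, Pi.smul_apply, smul_eq_mul, Finset.sum_mul,
    Finset.mul_sum]
  rw [Finset.sum_comm]
  refine Finset.sum_congr rfl fun i _ => Finset.sum_congr rfl fun j _ => by ring

lemma rearr (N k : ℕ) (hk1 : 1 ≤ k) (hk : k ≤ N) (β p : ℕ → ℝ)
    (hβ0 : ∀ i, i < N → 0 ≤ β i) (hβ : ∀ i j, i ≤ j → j < N → β j ≤ β i)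
    (hp0 : ∀ i, i < N → 0 ≤ p i) (hp1 : ∀ i, i < N → p i ≤ 1)
    (hp : ∑ i ∈ Finset.range N, p i ≤ k) :
    ∑ i ∈ Finset.range N, β i * p i ≤ ∑ i ∈ Finset.range k, β i := by
  have ht : 0 ≤ β (k-1) := hβ0 _ (by omega)
  set t := β (k-1) with htd
  have hs : ∀ g : ℕ → ℝ, ∑ i ∈ Finset.range k, g i
      = ∑ i ∈ Finset.range N, if i < k then g i else 0 := by
    intro g
    rw [← Finset.sum_filter]
    congr 1
    ext i; simp; omega
  have hkk : (k : ℝ) = ∑ i ∈ Finset.range N, if i < k then (1:ℝ) else 0 := by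
    rw [← hs]; simp
  have key : ∑ i ∈ Finset.range N, β i * p i ≤ ∑ i ∈ Finset.range N,
      ((if i < k then β i else 0) + t * p i - t * (if i < k then (1:ℝ) else 0)) := by
    refine Finset.sum_le_sum fun i hi => ?_
    have hi := Finset.mem_range.mp hi
    have h0 := hp0 i hi
    have h1 := hp1 i hi
    split_ifs with h
    · have : t ≤ β i := hβ i (k-1) (by omega) (by omega)
      nlinarith
    · have : β i ≤ t := hβ (k-1) i (by omega) hi
      nlinarith
  rw [Finset.sum_sub_distrib, Finset.sum_add_distrib, ← Finset.mul_sum, ← Finset.mul_sum, ← hkk,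
    ← hs] at key
  nlinarith

/-- Inner product of two truncated Schmidt decompositions. -/
lemma vinner_dec {ι κ : Type*} [Fintype ι] [Fintype κ] {N k : ℕ} (hk : k ≤ N)
    (α : ℕ → ℝ) (a a' : ℕ → ι → ℂ) (b : ℕ → κ → ℂ)
    (hb : ∀ i j, i < N → j < N → vinner (b i) (b j) = if i = j then 1 else 0) :
    vinner (∑ i ∈ Finset.range k, α i • prodVec (a i) (b i))
      (∑ i ∈ Finset.range N, α i • prodVec (a' i) (b i)) =
    ∑ i ∈ Finset.range k, (α i : ℂ) ^ 2 * vinner (a i) (a' i) := by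
  rw [vinner_sum_left]
  refine Finset.sum_congr rfl fun i hi => ?_
  have hi := Finset.mem_range.mp hi
  rw [vinner_sum_right, Finset.sum_eq_single_of_mem i (Finset.mem_range.mpr (by omega))]
  · rw [vinner_rsmul_left, vinner_rsmul_right, vinner_prodVec, hb i i (by omega) (by omega)]
    simp; ring
  · intro j hj hji
    have hj := Finset.mem_range.mp hj
    rw [vinner_rsmul_left, vinner_rsmul_right, vinner_prodVec, hb i j (by omega) (by omega),
      if_neg (Ne.symm hji)]
    simp

lemma upper {ι κ : Type*} [Fintype ι] [Fintype κ] {N k : ℕ} (hk1 : 1 ≤ k) (hk : k ≤ N)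
    (α : ℕ → ℝ) (a : ℕ → ι → ℂ) (b : ℕ → κ → ℂ)
    (hα0 : ∀ i, i < N → 0 ≤ α i)
    (hαmono : ∀ i j, i ≤ j → j < N → α j ≤ α i)
    (ha : ∀ i j, i < N → j < N → vinner (a i) (a j) = if i = j then 1 else 0)
    (hb : ∀ i j, i < N → j < N → vinner (b i) (b j) = if i = j then 1 else 0)
    (u : ι × κ → ℂ) (hu : vinner u u = 1) (hr : SchmidtRankLE k u) :
    ‖vinner u (∑ i ∈ Finset.range N, α i • prodVec (a i) (b i))‖ ^ 2
      ≤ ∑ i ∈ Finset.range k, α i ^ 2 := by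
  obtain ⟨r, hrk, f, hf, g, rfl⟩ := rank_form u hr
  let q : ℕ → Fin r → ℂ := fun i j => vinner (f j) (a i)
  let e : Fin r → Fin r → ℂ := fun j => Pi.single j 1
  have he : ∀ i j, vinner (e i) (e j) = if i = j then 1 else 0 := by
    intro i j
    simp [vinner, e, Pi.single_apply, dotProduct_single, eq_comm]
  have heq : ∀ i j, vinner (e j) (q i) = vinner (f j) (a i) := by
    intro i j
    simp only [vinner, e, q]
    rw [← Pi.single_star, single_dotProduct]; simp [vinner]
  let G := ∑ j, prodVec (e j) (g j)
  let H := ∑ i ∈ Finset.range N, α i • prodVec (q i) (b i)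
  have hGG : vinner G G = (1 : ℝ) := by
    rw [Complex.ofReal_one, ← hu]
    simp only [G, vinner_sum_left, vinner_sum_right, vinner_prodVec, he, hf]
  have hGH : vinner (∑ j, prodVec (f j) (g j))
      (∑ i ∈ Finset.range N, α i • prodVec (a i) (b i)) = vinner G H := by
    simp only [G, H, vinner_sum_left, vinner_sum_right, vinner_rsmul_right, vinner_prodVec, heq]
  have hqq : ∀ i, vinner (q i) (q i) = ((∑ j, ‖vinner (f j) (a i)‖ ^ 2 : ℝ) : ℂ) := by
    intro i
    rw [vinner_self, EuclideanSpace.norm_sq_eq]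
  have hHH : vinner H H =
      ((∑ i ∈ Finset.range N, α i ^ 2 * ∑ j, ‖vinner (f j) (a i)‖ ^ 2 : ℝ) : ℂ) := by
    rw [vinner_dec le_rfl α q q b hb, Complex.ofReal_sum]
    refine Finset.sum_congr rfl fun i _ => ?_
    rw [hqq]; push_cast; ring
  rw [hGH]
  refine (vinner_cs G H _ _ hGG hHH).trans ?_
  rw [one_mul]
  refine rearr N k hk1 hk (fun i => α i ^ 2) (fun i => ∑ j, ‖vinner (f j) (a i)‖ ^ 2)
    (fun i _ => sq_nonneg _) ?_ ?_ ?_ ?_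
  · intro i j hij hj
    exact pow_le_pow_left₀ (hα0 j hj) (hαmono i j hij hj) 2
  · intro i _; positivity
  · intro i hi
    exact vinner_bessel Finset.univ f (fun i _ j _ => hf i j) (a i) (by simpa using ha i i hi hi)
  · rw [Finset.sum_comm]
    have : ∀ j : Fin r, ∑ i ∈ Finset.range N, ‖vinner (f j) (a i)‖ ^ 2 ≤ 1 := by
      intro j
      simp only [norm_vinner_comm (f j)]
      exact vinner_bessel _ a (fun i hi j hj => ha i j (Finset.mem_range.mp hi)
        (Finset.mem_range.mp hj)) (f j) (by simpa using hf j j)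
    calc _ ≤ ∑ j : Fin r, (1:ℝ) := Finset.sum_le_sum fun j _ => this j
      _ = r := by simp
      _ ≤ k := by exact_mod_cast hrk

/-- for a unit vector `v` with Schmidt coefficients
`α 0 ≥ α 1 ≥ ⋯ ≥ α (min m n - 1) ≥ 0` (presented via a Schmidt decomposition; the 0-based
`α i` is the paper's `α_{i+1}`), we have `r_k^⊗(|v⟩⟨v|) = ‖|v⟩⟨v|‖_{S(k)} = Σ_{i=1}^k α_i²`. -/
theorem prodRad_SkNorm_of_pure {m n k : ℕ} (hk1 : 1 ≤ k) (hk : k ≤ min m n)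
    (v : Fin m × Fin n → ℂ) (hv : vinner v v = 1)
    (α : ℕ → ℝ) (a : ℕ → Fin m → ℂ) (b : ℕ → Fin n → ℂ)
    (hα0 : ∀ i, i < min m n → 0 ≤ α i)
    (hαmono : ∀ i j, i ≤ j → j < min m n → α j ≤ α i)
    (ha : ∀ i j, i < min m n → j < min m n → vinner (a i) (a j) = if i = j then 1 else 0)
    (hb : ∀ i j, i < min m n → j < min m n → vinner (b i) (b j) = if i = j then 1 else 0)
    (hdec : v = ∑ i ∈ Finset.range (min m n), α i • prodVec (a i) (b i)) :
    prodRad k (ketBra v v) = ∑ i ∈ Finset.range k, α i ^ 2 ∧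
    SkNorm k (ketBra v v) = ∑ i ∈ Finset.range k, α i ^ 2 := by
  set S := ∑ i ∈ Finset.range k, α i ^ 2 with hS
  have hS0 : 0 ≤ S := Finset.sum_nonneg fun i _ => sq_nonneg _
  have hSpos : 0 < S := by
    refine lt_of_le_of_ne hS0 fun h0 => ?_
    have h1 := (Finset.sum_eq_zero_iff_of_nonneg (fun i _ => sq_nonneg (α i))).mp h0.symm 0
      (Finset.mem_range.mpr hk1)
    have h2 : α 0 = 0 := by simpa using h1
    have h3 : v = 0 := by
      rw [hdec]
      refine Finset.sum_eq_zero fun i hi => ?_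
      have hi := Finset.mem_range.mp hi
      have : α i = 0 := le_antisymm (h2 ▸ hαmono 0 i (Nat.zero_le _) hi) (hα0 i hi)
      rw [this, zero_smul]
    rw [h3] at hv
    simp [vinner] at hv
  have hup : ∀ u : Fin m × Fin n → ℂ, vinner u u = 1 → SchmidtRankLE k u →
      ‖vinner u v‖ ≤ √S := by
    intro u hu hr
    refine Real.le_sqrt_of_sq_le ?_
    rw [hdec]
    exact upper hk1 hk α a b hα0 hαmono ha hb u hu hr
  let u : Fin m × Fin n → ℂ :=
    (√S)⁻¹ • ∑ i ∈ Finset.range k, α i • prodVec (a i) (b i)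
  have hsne : ((√S : ℝ) : ℂ) ≠ 0 := by exact_mod_cast (Real.sqrt_pos.mpr hSpos).ne'
  have hsq : (S : ℂ) = ((√S : ℝ) : ℂ) * ((√S : ℝ) : ℂ) := by
    exact_mod_cast (Real.mul_self_sqrt hS0).symm
  have hval : ∀ N, k ≤ N → N ≤ min m n →
      vinner (∑ i ∈ Finset.range k, α i • prodVec (a i) (b i))
      (∑ i ∈ Finset.range N, α i • prodVec (a i) (b i)) = (S : ℂ) := by
    intro N hkN hN
    rw [vinner_dec hkN α a a b (fun i j hi hj => hb i j (by omega) (by omega)), hS,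
      Complex.ofReal_sum]
    refine Finset.sum_congr rfl fun i hi => ?_
    have hi := Finset.mem_range.mp hi
    rw [ha i i (by omega) (by omega)]
    simp
  have huu : vinner u u = 1 := by
    simp only [u]
    rw [vinner_rsmul_left, vinner_rsmul_right, hval k le_rfl hk, hsq, Complex.ofReal_inv]
    field_simp
  have huv : vinner u v = ((√S : ℝ) : ℂ) := by
    rw [hdec]
    simp only [u]
    rw [vinner_rsmul_left, hval _ hk le_rfl, hsq, Complex.ofReal_inv]
    field_simp
  have hur : SchmidtRankLE k u := by
    refine ⟨fun i => ((√S)⁻¹ * α i) • a i, fun i => b i, ?_⟩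
    simp only [u]
    rw [Finset.sum_range, Finset.smul_sum]
    refine Finset.sum_congr rfl fun i _ => ?_
    ext p
    simp [prodVec, mul_assoc]
  have huval : S = ‖vinner u ((ketBra v v).mulVec u)‖ := by
    rw [vinner_ketBra, norm_mul, norm_vinner_comm v u, huv, Complex.norm_real, Real.norm_eq_abs,
      abs_mul_abs_self, Real.mul_self_sqrt hS0]
  have hbd : ∀ x y : Fin m × Fin n → ℂ, vinner x x = 1 → vinner y y = 1 →
      SchmidtRankLE k x → SchmidtRankLE k y → ‖vinner x ((ketBra v v).mulVec y)‖ ≤ S := by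
    intro x y hx hy hxr hyr
    rw [vinner_ketBra, norm_mul, norm_vinner_comm v y, ← Real.mul_self_sqrt hS0]
    exact mul_le_mul (hup x hx hxr) (hup y hy hyr) (norm_nonneg _) (Real.sqrt_nonneg _)
  constructor
  · refine IsGreatest.csSup_eq ⟨⟨u, huu, hur, huval⟩, ?_⟩
    rintro _ ⟨x, hx, hxr, rfl⟩
    exact hbd x x hx hx hxr hxr
  · refine IsGreatest.csSup_eq ⟨⟨u, u, huu, huu, hur, hur, huval⟩, ?_⟩
    rintro _ ⟨x, y, hx, hy, hxr, hyr, rfl⟩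
    exact hbd x y hx hy hxr hyr

end Ent
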